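/- Let (V, λ) be a nonsingular symmetric bilinear form over ℤ/2 with dim V = 2m, let q be a ℤ/4-valued quadratic enhancement of λ, and let L ⊆ V be a ℤ/2-subspace with dim L = m such that λ(x,y) = 0 and q(x) = 0 for all x, y ∈ L (a lagrangian of (V,λ,q)). Then ∑_{x∈V} i^{q(x)} = 2^m. (A ℤ/4-quadratic form admitting a lagrangian has Brown–Kervaire invariant 0 ∈ ℤ/8.) -/

import Mathlib

/-!
Averaging the Gauss sum `S` over translations by the lagrangian gives
`|L| · S = ∑ x, i^{q x} · ∑ y ∈ L, (-1)^{λ(x,y)}`, because `q` vanishes on `L`. The inner sum is a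
character sum on `L`: it is `|L|` for `x ∈ L^⊥` and `0` otherwise (`sum_char_eq_zero`).
Nonsingularity and `dim V = 2 dim L` force `L^⊥ = L` (`mem_of_orthogonal_lagrangian`), on which
`q = 0`, so `|L| · S = |L|²` and `S = |L| = 2^m`.
-/

/-- The additive injection `ℤ/2 → ℤ/4` sending `1` to `2`. -/
def iota : ZMod 2 → ZMod 4 := fun a => 2 * (a.val : ZMod 4)

/-- The map `a ↦ i^a` is well defined on `ℤ/4` and turns addition into multiplication. -/
lemma I_pow_val_add (a b : ZMod 4) :
    Complex.I ^ (a + b).val = Complex.I ^ a.val * Complex.I ^ b.val := by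
  rw [← pow_add, ZMod.val_add, ← Complex.I_pow_eq_pow_mod]

lemma I_pow_iota_add (a b : ZMod 2) :
    Complex.I ^ (iota (a + b)).val =
      Complex.I ^ (iota a).val * Complex.I ^ (iota b).val := by
  have h : iota (a + b) = iota a + iota b := by revert a b; decide
  rw [h, I_pow_val_add]

/-- Orthogonality of characters for the character `(-1)^f` of a finite `ℤ/2`-vector space. -/
lemma sum_char_eq_zero {W : Type*} [AddCommGroup W] [Module (ZMod 2) W] [Fintype W]
    (f : W →ₗ[ZMod 2] ZMod 2) (hf : f ≠ 0) :
    ∑ y : W, Complex.I ^ (iota (f y)).val = 0 := by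
  obtain ⟨z, hz⟩ : ∃ z, f z ≠ 0 := by
    by_contra! h
    exact hf (LinearMap.ext h)
  have hz1 : f z = 1 := by
    generalize f z = a at hz
    revert a; decide
  -- Translating by `z` changes the sign of every summand.
  have h := Equiv.sum_comp (Equiv.addRight z) fun y : W => Complex.I ^ (iota (f y)).val
  have hi : (iota 1).val = 2 := by decide
  simp only [Equiv.coe_addRight, map_add, I_pow_iota_add, hz1, hi, Complex.I_sq, mul_neg, mul_one,
    Finset.sum_neg_distrib] at h
  linear_combination (-1 / 2 : ℂ) * h

/-- A totally isotropic subspace of half the dimension contains its orthogonal complement. -/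
lemma mem_of_orthogonal_lagrangian
    {V : Type*} [AddCommGroup V] [Module (ZMod 2) V] [FiniteDimensional (ZMod 2) V]
    (m : ℕ) (hdim : Module.finrank (ZMod 2) V = 2 * m)
    (l : V →ₗ[ZMod 2] V →ₗ[ZMod 2] ZMod 2)
    (hsymm : ∀ x y : V, l x y = l y x)
    (hinj : Function.Injective fun x : V => l x)
    (L : Submodule (ZMod 2) V)
    (hLdim : Module.finrank (ZMod 2) L = m)
    (hLlam : ∀ x ∈ L, ∀ y ∈ L, l x y = 0)
    (x : V) (hx : ∀ y ∈ L, l x y = 0) : x ∈ L := by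
  have hsep : l.SeparatingLeft := fun a ha => hinj (by
    ext b
    simp [ha b])
  have hnd : LinearMap.BilinForm.Nondegenerate l :=
    ⟨hsep, fun a ha => hsep a fun b => by rw [hsymm]; exact ha b⟩
  have hle : L ≤ LinearMap.BilinForm.orthogonal l L := fun a ha b hb => hLlam b hb a ha
  have hfin := LinearMap.BilinForm.finrank_orthogonal hnd L
  have heq := Submodule.eq_of_le_of_finrank_eq hle (by omega)
  rw [heq]
  exact fun y hy => by
    change l y x = 0
    rw [hsymm]
    exact hx y hy

/-- A `ℤ/4`-valued quadratic form admitting a lagrangian has Gauss sum `2^m`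
(i.e. Brown–Kervaire invariant `0 ∈ ℤ/8`). -/
theorem gauss_sum_of_lagrangian
    {V : Type*} [AddCommGroup V] [Module (ZMod 2) V] [FiniteDimensional (ZMod 2) V]
    [Fintype V]
    (m : ℕ) (hdim : Module.finrank (ZMod 2) V = 2 * m)
    (l : V →ₗ[ZMod 2] V →ₗ[ZMod 2] ZMod 2)
    (hsymm : ∀ x y : V, l x y = l y x)
    (hnonsing : Function.Bijective fun x : V => l x)
    (q : V → ZMod 4)
    (hq : ∀ x y : V, q (x + y) = q x + q y + iota (l x y))
    (L : Submodule (ZMod 2) V)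
    (hLdim : Module.finrank (ZMod 2) L = m)
    (hLlam : ∀ x ∈ L, ∀ y ∈ L, l x y = 0)
    (hLq : ∀ x ∈ L, q x = 0) :
    ∑ x : V, Complex.I ^ (q x).val = (2 : ℂ) ^ m := by
  classical
  have hcard : (Fintype.card L : ℂ) = 2 ^ m := by
    rw [Module.card_eq_pow_finrank (K := ZMod 2), hLdim, ZMod.card]
    norm_num
  have hinner : ∀ x : V, Complex.I ^ (q x).val * ∑ y : L, Complex.I ^ (iota (l x y)).val =
      if x ∈ L then (2 : ℂ) ^ m else 0 := by
    intro x
    split_ifs with hx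
    · have h0 : (iota 0).val = 0 := by decide
      have h1 : ∀ y : L, l x y = 0 := fun y => hLlam x hx y y.2
      simp [hLq x hx, h1, h0, hcard]
    · have hne : (l x).domRestrict L ≠ 0 := fun h =>
        hx (mem_of_orthogonal_lagrangian m hdim l hsymm hnonsing.1 L hLdim hLlam x
          fun y hy => LinearMap.congr_fun h ⟨y, hy⟩)
      have hs := sum_char_eq_zero _ hne
      simp only [LinearMap.domRestrict_apply] at hs
      rw [hs, mul_zero]
  have htrans : ∀ y : L, ∑ x : V, Complex.I ^ (q x).val =
      ∑ x : V, Complex.I ^ (q x).val * Complex.I ^ (iota (l x y)).val := by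
    intro y
    rw [← Equiv.sum_comp (Equiv.addRight (y : V))]
    refine Finset.sum_congr rfl fun x _ => ?_
    rw [Equiv.coe_addRight, hq, hLq y y.2, add_zero, I_pow_val_add]
  have hmul : (2 : ℂ) ^ m * ∑ x : V, Complex.I ^ (q x).val = 2 ^ m * 2 ^ m := by
    calc (2 : ℂ) ^ m * ∑ x : V, Complex.I ^ (q x).val
        = ∑ _y : L, ∑ x : V, Complex.I ^ (q x).val := by simp [hcard]
      _ = ∑ y : L, ∑ x : V, Complex.I ^ (q x).val * Complex.I ^ (iota (l x y)).val :=
          Finset.sum_congr rfl fun y _ => htrans y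
      _ = ∑ x : V, if x ∈ L then (2 : ℂ) ^ m else 0 := by
          rw [Finset.sum_comm]
          simp only [← Finset.mul_sum, hinner]
      _ = 2 ^ m * 2 ^ m := by
          rw [← Finset.sum_filter, Finset.sum_const, nsmul_eq_mul, ← Fintype.card_subtype]
          congr 1
  exact mul_left_cancel₀ (pow_ne_zero m two_ne_zero) hmul
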